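/- arXiv:1307.0028 — 2 statements merged into one kernel-verified Lean document; each statement's English description precedes it below -/
import Mathlib

section
/- The function φ_KdV belongs to N_KdV (that is, ∫ φ_KdV² dx = 2α_KdV), its energy satisfies E_KdV(φ_KdV) = c_KdV, and every φ ∈ N_KdV satisfies E_KdV(φ) ≥ c_KdV. Consequently c_KdV = inf{ E_KdV(φ) : φ ∈ N_KdV } and the infimum is attained at φ_KdV. -/
open MeasureTheory

noncomputable def sech (x : ℝ) : ℝ := 1 / Real.cosh x

/-- `H1Pair φ φ'` expresses that `φ` belongs to `H¹(ℝ)` with weak derivative `φ'`: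
`φ` is continuous and square-integrable, `φ'` is square-integrable, and
`φ b - φ a = ∫ₐᵇ φ'` for all `a ≤ b`. -/
def H1Pair (φ φ' : ℝ → ℝ) : Prop :=
  Continuous φ ∧ Integrable (fun x => (φ x) ^ 2) ∧ Integrable (fun x => (φ' x) ^ 2) ∧
    ∀ a b : ℝ, a ≤ b → φ b - φ a = ∫ t in a..b, φ' t

/-- The Korteweg–de Vries energy `E_KdV(φ) = (1/2)∫ (c φ'² + d φ³) dx`. -/
noncomputable def EKdV (c d : ℝ) (φ φ' : ℝ → ℝ) : ℝ :=
  (1 / 2) * ∫ x : ℝ, (c * (φ' x) ^ 2 + d * (φ x) ^ 3)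

/-!
A function `φ ∈ H¹(ℝ)` vanishes at infinity, so if it is negative somewhere it attains a minimum,
which we write as `-c k² / d`. By AM-GM,
`c φ'² + d φ³ + c k² φ² = c φ'² + c φ² (d φ / c + k²) ≥ |2 c φ √(d φ / c + k²) φ'|`,
and on each half-line from the minimum point the substitution `s = φ x` bounds the integral of the
right-hand side from below by `∫ 2 c |s| √(d s / c + k²) ds` over `[-c k² / d, 0]`. Hence
`2 E(φ) + c k² ∫ φ² ≥ (16 / 15) c³ k⁵ / d²`. For a given mass `∫ φ² = (64 / 3) c² κ³ / d²` the
resulting lower bound on `E(φ)` is least at `k = 2 κ`, and there both inequalities are equalities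
for the soliton `-(4 c κ² / d) sech² (κ x)`.
-/

open Filter Set Topology

theorem absolutelyContinuousOnInterval_comp_of_lipschitzOnWith {X Y : Type*}
    [PseudoMetricSpace X] [PseudoMetricSpace Y] {G : X → Y} {φ : ℝ → X} {a b : ℝ} {K : NNReal}
    (hG : LipschitzOnWith K G (φ '' uIcc a b))
    (hφ : AbsolutelyContinuousOnInterval φ a b) :
    AbsolutelyContinuousOnInterval (G ∘ φ) a b := by
  refine squeeze_zero' (.of_forall fun _ => Finset.sum_nonneg fun _ _ => dist_nonneg) ?_
    (by simpa using Tendsto.const_mul (K : ℝ) hφ)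
  rw [eventually_inf_principal]
  filter_upwards with E hE
  rw [Finset.mul_sum]
  gcongr with i hi
  exact hG.dist_le_mul _ (mem_image_of_mem φ (hE.1 i hi).1) _ (mem_image_of_mem φ (hE.1 i hi).2)

theorem integral_comp_mul_of_absolutelyContinuousOnInterval {g φ φ' : ℝ → ℝ} {a b : ℝ}
    (hg : Continuous g) (hφ : AbsolutelyContinuousOnInterval φ a b)
    (hφ' : ∀ᵐ x, HasDerivAt φ (φ' x) x) :
    ∫ x in a..b, g (φ x) * φ' x = ∫ s in φ a..φ b, g s := by
  set G : ℝ → ℝ := fun u => ∫ r in φ a..u, g r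
  have hG (s : ℝ) : HasDerivAt G (g s) s := (hg.integral_hasStrictDerivAt _ s).hasDerivAt
  have hG1 : ContDiff ℝ 1 G :=
    contDiff_one_iff_deriv.2 ⟨fun s => (hG s).differentiableAt, by rwa [deriv_eq hG]⟩
  obtain ⟨K, hK⟩ := (hG1.locallyLipschitz.locallyLipschitzOn
    (s := φ '' uIcc a b)).exists_lipschitzOnWith_of_compact
    (isCompact_uIcc.image_of_continuousOn hφ.continuousOn)
  have hGφ := absolutelyContinuousOnInterval_comp_of_lipschitzOnWith hK hφ
  calc ∫ x in a..b, g (φ x) * φ' x = ∫ x in a..b, deriv (G ∘ φ) x := by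
        refine intervalIntegral.integral_congr_ae ?_
        filter_upwards [hφ'] with x hx _
        exact ((hG (φ x)).comp x hx).deriv.symm
    _ = ∫ s in φ a..φ b, g s := by simp [hGφ.integral_deriv_eq_sub, G]

theorem EKdV_nonneg {c d : ℝ} {φ : ℝ → ℝ} (hc : 0 ≤ c) (hd : 0 ≤ d) (hφ : ∀ x, 0 ≤ φ x)
    (φ' : ℝ → ℝ) : 0 ≤ EKdV c d φ φ' :=
  mul_nonneg (by norm_num) <| integral_nonneg fun x =>
    add_nonneg (mul_nonneg hc (sq_nonneg _)) (mul_nonneg hd (pow_nonneg (hφ x) 3))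

theorem abs_two_mul_mul_sqrt_mul_le {c w : ℝ} (hc : 0 ≤ c) (hw : 0 ≤ w) (s p : ℝ) :
    |2 * c * s * √w * p| ≤ c * p ^ 2 + c * s ^ 2 * w := by
  have hsq : c * p ^ 2 + c * s ^ 2 * w = c * (p ^ 2 + (s * √w) ^ 2) := by
    rw [mul_pow, Real.sq_sqrt hw]
    ring
  rw [hsq, abs_le]
  constructor
  · nlinarith [mul_nonneg hc (sq_nonneg (p + s * √w))]
  · nlinarith [mul_nonneg hc (sq_nonneg (p - s * √w))]

theorem integral_mul_sqrt_mul_add {k q : ℝ} (hk : 0 ≤ k) (hq : q ≠ 0) :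
    ∫ s in -(k ^ 2 / q)..0, s * √(q * s + k ^ 2) = -(4 / 15) * k ^ 5 / q ^ 2 := by
  have hderiv (r : ℝ) : HasDerivAt (fun r => (r ^ 2 - k ^ 2) / q) (2 * r / q) r := by
    simpa using ((hasDerivAt_pow 2 r).sub_const (k ^ 2)).div_const q
  have hsqrt {r : ℝ} (hr : 0 ≤ r) : √(q * ((r ^ 2 - k ^ 2) / q) + k ^ 2) = r := by
    rw [mul_div_cancel₀ _ hq, sub_add_cancel, Real.sqrt_sq hr]
  calc ∫ s in -(k ^ 2 / q)..0, s * √(q * s + k ^ 2)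
      = ∫ s in (0 ^ 2 - k ^ 2) / q..(k ^ 2 - k ^ 2) / q, s * √(q * s + k ^ 2) := by
        congr 1 <;> ring
    _ = ∫ r in 0..k, (r ^ 2 - k ^ 2) / q * √(q * ((r ^ 2 - k ^ 2) / q) + k ^ 2) * (2 * r / q) :=
        (intervalIntegral.integral_comp_mul_deriv (g := fun s => s * √(q * s + k ^ 2))
          (fun r _ => hderiv r) (by fun_prop) (by fun_prop)).symm
    _ = ∫ r in 0..k, 2 / q ^ 2 * (r ^ 4 - k ^ 2 * r ^ 2) := by
        refine intervalIntegral.integral_congr fun r hr => ?_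
        rw [uIcc_of_le hk] at hr
        simp only [hsqrt hr.1]
        ring
    _ = -(4 / 15) * k ^ 5 / q ^ 2 := by
        rw [intervalIntegral.integral_const_mul, intervalIntegral.integral_sub
          (Continuous.intervalIntegrable (by fun_prop) _ _)
          (Continuous.intervalIntegrable (by fun_prop) _ _),
          intervalIntegral.integral_const_mul, integral_pow, integral_pow]
        ring

namespace H1Pair

variable {φ φ' : ℝ → ℝ}

theorem sub_eq_integral (h : H1Pair φ φ') (a b : ℝ) : φ b - φ a = ∫ x in a..b, φ' x := by
  rcases le_total a b with hab | hba
  · exact h.2.2.2 a b hab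
  · rw [intervalIntegral.integral_symm, ← h.2.2.2 b a hba, neg_sub]

/-- Across a point where `φ'` is not integrable, `∫ φ'` is the junk value `0`: `φ` is constant. -/
theorem locallyIntegrable_or_eq_zero (h : H1Pair φ φ') : LocallyIntegrable φ' ∨ φ = 0 := by
  by_contra! hcon
  obtain ⟨hloc, hne⟩ := hcon
  obtain ⟨p, hp⟩ : ∃ p, ¬ IntegrableAtFilter φ' (𝓝 p) := by simpa [LocallyIntegrable] using hloc
  have hjump {a b : ℝ} (ha : a < p) (hb : p < b) : φ b = φ a := by
    rw [← sub_eq_zero, h.sub_eq_integral, intervalIntegral.integral_undef]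
    rw [intervalIntegrable_iff_integrableOn_Ioc_of_le (ha.trans hb).le]
    exact fun hab => hp ⟨Ioc a b, Ioc_mem_nhds ha hb, hab⟩
  have hae : φ =ᵐ[volume] fun _ => φ (p + 1) := by
    filter_upwards [Measure.ae_ne volume p] with x hx
    rcases lt_or_gt_of_ne hx with hxp | hpx
    · exact (hjump hxp (lt_add_one p)).symm
    · rw [hjump (sub_one_lt p) hpx, hjump (sub_one_lt p) (lt_add_one p)]
  have hconst : φ = fun _ => φ (p + 1) := (h.1.ae_eq_iff_eq volume continuous_const).1 hae
  have hsq : Integrable fun _ : ℝ => φ (p + 1) ^ 2 := by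
    have := h.2.1
    rwa [hconst] at this
  have hzero : φ (p + 1) = 0 := by simpa [integrable_const_iff, isFiniteMeasure_iff] using hsq
  exact hne (hconst.trans (funext fun _ => hzero))

theorem integral_comp_mul {g : ℝ → ℝ} (h : H1Pair φ φ') (hg : Continuous g) (a b : ℝ) :
    ∫ x in a..b, g (φ x) * φ' x = ∫ s in φ a..φ b, g s := by
  rcases h.locallyIntegrable_or_eq_zero with hloc | rfl
  · have hφ : φ = fun x => φ a + ∫ t in a..x, φ' t := by
      ext x
      rw [← h.sub_eq_integral, add_sub_cancel]
    have hac : AbsolutelyContinuousOnInterval φ a b := by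
      have hint : IntervalIntegrable φ' volume a b := intervalIntegrable_iff.2 <|
        (hloc.integrableOn_isCompact isCompact_uIcc).mono_set uIoc_subset_uIcc
      rw [hφ]
      exact (LipschitzWith.const (φ a)).lipschitzOnWith.absolutelyContinuousOnInterval.fun_add
        (hint.absolutelyContinuousOnInterval_intervalIntegral left_mem_uIcc)
    refine integral_comp_mul_of_absolutelyContinuousOnInterval hg hac ?_
    filter_upwards [LocallyIntegrable.ae_hasDerivAt_integral hloc] with x hx
    rw [hφ]
    exact (hx a).const_add _
  · simp only [Pi.zero_apply, intervalIntegral.integral_const_mul, ← h.sub_eq_integral, sub_self,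
      mul_zero, intervalIntegral.integral_same]

theorem integrable_mul (h : H1Pair φ φ') : Integrable fun x => φ x * φ' x := by
  rcases h.locallyIntegrable_or_eq_zero with hloc | rfl
  · have hφ : MemLp φ 2 := (memLp_two_iff_integrable_sq h.1.aestronglyMeasurable).2 h.2.1
    have hφ' : MemLp φ' 2 := (memLp_two_iff_integrable_sq hloc.aestronglyMeasurable).2 h.2.2.1
    exact hφ.integrable_mul hφ'
  · simp

theorem sq_eq_sq_add_integral (h : H1Pair φ φ') (a b : ℝ) :
    φ b ^ 2 = φ a ^ 2 + ∫ x in a..b, 2 * (φ x * φ' x) := by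
  have hsubst := h.integral_comp_mul (g := id) continuous_id a b
  simp only [id_eq, integral_id] at hsubst
  rw [intervalIntegral.integral_const_mul, hsubst]
  ring

theorem tendsto_zero_of_tendsto_sq (h : H1Pair φ φ') {l : Filter ℝ} {L : ℝ}
    (hl : ∀ s ∈ l, volume s = ⊤) (hL : Tendsto (fun x => φ x ^ 2) l (𝓝 L)) :
    Tendsto φ l (𝓝 0) := by
  obtain rfl : L = 0 := (h.2.1.integrableAtFilter l).eq_zero_of_tendsto hl hL
  rw [tendsto_zero_iff_abs_tendsto_zero]
  simpa [Function.comp_def, Real.sqrt_sq_eq_abs] using hL.sqrt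

theorem tendsto_atTop (h : H1Pair φ φ') : Tendsto φ atTop (𝓝 0) := by
  refine h.tendsto_zero_of_tendsto_sq (L := φ 0 ^ 2 + ∫ x in Ioi 0, 2 * (φ x * φ' x)) ?_ ?_
  · intro s hs
    obtain ⟨b, hb⟩ := mem_atTop_sets.1 hs
    exact measure_mono_top hb Real.volume_Ici
  · exact ((intervalIntegral_tendsto_integral_Ioi 0 (h.integrable_mul.const_mul 2).integrableOn
      tendsto_id).const_add (φ 0 ^ 2)).congr fun x => (h.sq_eq_sq_add_integral 0 x).symm

theorem comp_neg (h : H1Pair φ φ') : H1Pair (fun x => φ (-x)) fun x => -φ' (-x) := by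
  refine ⟨h.1.comp continuous_neg, h.2.1.comp_neg, ?_, fun a b _ => ?_⟩
  · simpa only [neg_sq] using h.2.2.1.comp_neg
  · rw [intervalIntegral.integral_neg, intervalIntegral.integral_comp_neg, ← h.sub_eq_integral,
      neg_sub]

theorem tendsto_atBot (h : H1Pair φ φ') : Tendsto φ atBot (𝓝 0) := by
  simpa [Function.comp_def] using h.comp_neg.tendsto_atTop.comp tendsto_neg_atBot_atTop

theorem tendsto_cocompact (h : H1Pair φ φ') : Tendsto φ (cocompact ℝ) (𝓝 0) := by
  rw [cocompact_eq_atBot_atTop]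
  exact h.tendsto_atBot.sup h.tendsto_atTop

theorem integrable_cube (h : H1Pair φ φ') : Integrable fun x => φ x ^ 3 := by
  let φ₀ : ZeroAtInftyContinuousMap ℝ ℝ := ⟨⟨φ, h.1⟩, h.tendsto_cocompact⟩
  have hbound (x : ℝ) : ‖φ x‖ ≤ ‖φ₀.toBCF‖ := φ₀.toBCF.norm_coe_le_norm x
  simpa only [← pow_succ'] using
    h.2.1.bdd_mul h.1.aestronglyMeasurable (.of_forall hbound)

theorem exists_forall_le (h : H1Pair φ φ') {x : ℝ} (hx : φ x < 0) : ∃ x₀, ∀ y, φ x₀ ≤ φ y :=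
  h.1.exists_forall_le' x ((h.tendsto_cocompact.eventually (lt_mem_nhds hx)).mono fun _ => le_of_lt)

theorem abs_integral_le_integral_Ioi {f g : ℝ → ℝ} (h : H1Pair φ φ') (hg : Continuous g)
    (hf : Integrable f) (hgf : ∀ x, |g (φ x) * φ' x| ≤ f x) (x₀ : ℝ) :
    |∫ s in φ x₀..0, g s| ≤ ∫ x in Ioi x₀, f x := by
  have hprim : Continuous fun u => ∫ s in φ x₀..u, g s := intervalIntegral.continuous_primitive
    (fun _ _ => hg.intervalIntegrable _ _) _
  refine le_of_tendsto_of_tendsto ((hprim.tendsto 0).comp h.tendsto_atTop).abs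
    (intervalIntegral_tendsto_integral_Ioi x₀ hf.integrableOn tendsto_id) ?_
  filter_upwards [eventually_ge_atTop x₀] with b hb
  rw [Function.comp_apply, ← h.integral_comp_mul hg, ← Real.norm_eq_abs]
  exact intervalIntegral.norm_integral_le_of_norm_le hb (.of_forall fun x _ => hgf x)
    hf.intervalIntegrable

theorem abs_integral_le_integral_Iic {f g : ℝ → ℝ} (h : H1Pair φ φ') (hg : Continuous g)
    (hf : Integrable f) (hgf : ∀ x, |g (φ x) * φ' x| ≤ f x) (x₀ : ℝ) :
    |∫ s in φ x₀..0, g s| ≤ ∫ x in Iic x₀, f x := by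
  have := h.comp_neg.abs_integral_le_integral_Ioi hg hf.comp_neg
    (fun x => by simpa only [mul_neg, abs_neg] using hgf (-x)) (-x₀)
  simpa only [neg_neg, integral_comp_neg_Ioi] using this

theorem two_mul_abs_integral_le_integral {f g : ℝ → ℝ} (h : H1Pair φ φ') (hg : Continuous g)
    (hf : Integrable f) (hgf : ∀ x, |g (φ x) * φ' x| ≤ f x) (x₀ : ℝ) :
    2 * |∫ s in φ x₀..0, g s| ≤ ∫ x, f x := by
  rw [← intervalIntegral.integral_Iic_add_Ioi hf.integrableOn hf.integrableOn (b := x₀), two_mul]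
  exact add_le_add (h.abs_integral_le_integral_Iic hg hf hgf x₀)
    (h.abs_integral_le_integral_Ioi hg hf hgf x₀)

theorem integrable_energy_density (h : H1Pair φ φ') (c d : ℝ) :
    Integrable fun x => c * φ' x ^ 2 + d * φ x ^ 3 :=
  (h.2.2.1.const_mul c).add (h.integrable_cube.const_mul d)

theorem integral_add_eq_EKdV (h : H1Pair φ φ') (c d l : ℝ) :
    ∫ x, (c * φ' x ^ 2 + d * φ x ^ 3 + l * φ x ^ 2) = 2 * EKdV c d φ φ' + l * ∫ x, φ x ^ 2 := by
  rw [integral_add (h.integrable_energy_density c d) (h.2.1.const_mul l), integral_const_mul, EKdV]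
  ring

theorem le_EKdV_add_mass {c d k x₀ : ℝ} (h : H1Pair φ φ') (hc : 0 < c) (hd : 0 < d) (hk : 0 ≤ k)
    (hx₀ : φ x₀ = -(c * k ^ 2 / d)) (hmin : ∀ x, φ x₀ ≤ φ x) :
    16 / 15 * (c ^ 3 * k ^ 5 / d ^ 2) ≤ 2 * EKdV c d φ φ' + c * k ^ 2 * ∫ x, φ x ^ 2 := by
  let g : ℝ → ℝ := fun s => 2 * c * s * √(d / c * s + k ^ 2)
  have hpot (x : ℝ) : 0 ≤ d / c * φ x + k ^ 2 := by
    calc 0 = d / c * φ x₀ + k ^ 2 := by rw [hx₀]; field_simp; ring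
      _ ≤ d / c * φ x + k ^ 2 := by gcongr; exact hmin x
  have hgf (x : ℝ) : |g (φ x) * φ' x| ≤ c * φ' x ^ 2 + d * φ x ^ 3 + c * k ^ 2 * φ x ^ 2 := by
    refine (abs_two_mul_mul_sqrt_mul_le hc.le (hpot x) _ _).trans_eq ?_
    field_simp
    ring
  have hg : ∫ s in φ x₀..0, g s = -(8 / 15 * (c ^ 3 * k ^ 5 / d ^ 2)) := by
    have hx₀' : φ x₀ = -(k ^ 2 / (d / c)) := by rw [hx₀]; field_simp
    simp only [g, mul_assoc (2 * c), intervalIntegral.integral_const_mul]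
    rw [hx₀', integral_mul_sqrt_mul_add hk (by positivity)]
    field_simp
    ring
  have hf : Integrable fun x => c * φ' x ^ 2 + d * φ x ^ 3 + c * k ^ 2 * φ x ^ 2 :=
    (h.integrable_energy_density c d).add (h.2.1.const_mul _)
  rw [← h.integral_add_eq_EKdV]
  refine le_trans (le_of_eq ?_)
    (h.two_mul_abs_integral_le_integral (by fun_prop) hf hgf x₀)
  rw [hg, abs_neg, abs_of_nonneg (by positivity)]
  ring

theorem le_EKdV {c d κ : ℝ} (h : H1Pair φ φ') (hc : 0 < c) (hd : 0 < d) (hκ : 0 ≤ κ)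
    (hmass : ∫ x, φ x ^ 2 = 64 / 3 * (c ^ 2 * κ ^ 3 / d ^ 2)) :
    -(128 / 5) * (c ^ 3 * κ ^ 5 / d ^ 2) ≤ EKdV c d φ φ' := by
  by_cases! hφ : ∀ x, 0 ≤ φ x
  · refine le_trans ?_ (EKdV_nonneg hc.le hd.le hφ φ')
    rw [neg_mul, neg_nonpos]
    positivity
  obtain ⟨x, hx⟩ := hφ
  obtain ⟨x₀, hmin⟩ := h.exists_forall_le hx
  have hx₀ : φ x₀ ≤ 0 := (hmin x).trans hx.le
  set b : ℝ := √(d * -φ x₀ / c) / 2 with hb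
  have hb0 : 0 ≤ b := by positivity
  have hx₀b : φ x₀ = -(c * (2 * b) ^ 2 / d) := by
    rw [hb, mul_div_cancel₀ _ two_ne_zero, Real.sq_sqrt (by have := neg_nonneg.2 hx₀; positivity)]
    field_simp
  have hlow := h.le_EKdV_add_mass hc hd (mul_nonneg zero_le_two hb0) hx₀b hmin
  -- The bound differs from the claim by a multiple of `2 b⁵ - 5 b² κ³ + 3 κ⁵`, which has the
  -- double root `b = κ`.
  have hfactor : 0 ≤ 128 / 15 * (c ^ 3 / d ^ 2) *
      ((b - κ) ^ 2 * (2 * b ^ 3 + 4 * b ^ 2 * κ + 6 * b * κ ^ 2 + 3 * κ ^ 3)) := by positivity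
  rw [hmass] at hlow
  linear_combination hlow / 2 + hfactor

end H1Pair

theorem sech_sq (x : ℝ) : sech x ^ 2 = 1 - Real.tanh x ^ 2 := by
  have hcosh := (Real.cosh_pos x).ne'
  rw [sech, Real.tanh_eq_sinh_div_cosh]
  field_simp
  linarith [Real.cosh_sq x]

theorem hasDerivAt_tanh (x : ℝ) : HasDerivAt Real.tanh (sech x ^ 2) x := by
  have hcosh := (Real.cosh_pos x).ne'
  have hquot := (Real.hasDerivAt_sinh x).div (Real.hasDerivAt_cosh x) hcosh
  rw [show Real.tanh = Real.sinh / Real.cosh from funext Real.tanh_eq_sinh_div_cosh]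
  refine hquot.congr_deriv ?_
  rw [sech, div_pow, one_pow, ← Real.cosh_sq_sub_sinh_sq x]
  ring

theorem continuous_sech : Continuous sech :=
  continuous_const.div Real.continuous_cosh fun x => (Real.cosh_pos x).ne'

theorem continuous_tanh : Continuous Real.tanh :=
  continuous_iff_continuousAt.2 fun x => (hasDerivAt_tanh x).continuousAt

section TanhSubstitution

variable {q : ℝ → ℝ} {κ : ℝ}

theorem integrable_sech_sq_mul_comp_tanh (hq : Continuous q) :
    Integrable fun x => sech x ^ 2 * q (Real.tanh x) := by
  have himage := integrableOn_image_iff_integrableOn_abs_deriv_smul MeasurableSet.univ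
    (fun x _ => (hasDerivAt_tanh x).hasDerivWithinAt) Real.tanh_injective.injOn q
  simp only [Real.tanh_bijOn.image_eq, abs_sq, smul_eq_mul, integrableOn_univ] at himage
  exact himage.1 (hq.integrableOn_Icc.mono_set Ioo_subset_Icc_self)

theorem integral_sech_sq_mul_comp_tanh (q : ℝ → ℝ) :
    ∫ x, sech x ^ 2 * q (Real.tanh x) = ∫ t in -1..1, q t := by
  have himage := integral_image_eq_integral_abs_deriv_smul MeasurableSet.univ
    (fun x _ => (hasDerivAt_tanh x).hasDerivWithinAt) Real.tanh_injective.injOn q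
  simp only [Real.tanh_bijOn.image_eq, abs_sq, smul_eq_mul, setIntegral_univ] at himage
  rw [intervalIntegral.integral_of_le (by norm_num), integral_Ioc_eq_integral_Ioo, himage]

theorem integrable_sech_sq_mul_comp_tanh_mul_left (hq : Continuous q) (hκ : κ ≠ 0) :
    Integrable fun x => sech (κ * x) ^ 2 * q (Real.tanh (κ * x)) :=
  (integrable_sech_sq_mul_comp_tanh hq).comp_mul_left' hκ

theorem integral_sech_sq_mul_comp_tanh_mul_left (hκ : 0 < κ) :
    ∫ x, sech (κ * x) ^ 2 * q (Real.tanh (κ * x)) = κ⁻¹ * ∫ t in -1..1, q t := by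
  rw [Measure.integral_comp_mul_left (fun x => sech x ^ 2 * q (Real.tanh x)) κ,
    integral_sech_sq_mul_comp_tanh, smul_eq_mul, abs_of_pos (inv_pos.2 hκ)]

end TanhSubstitution

/-- The `sech²` profile of depth `A` and wavenumber `κ`, centred at the origin. -/
noncomputable def kdvSoliton (A κ : ℝ) (x : ℝ) : ℝ := -A * sech (κ * x) ^ 2

section Soliton

variable {A κ : ℝ}

theorem kdvSoliton_sq (A κ x : ℝ) :
    kdvSoliton A κ x ^ 2 = A ^ 2 * (sech (κ * x) ^ 2 * (1 - Real.tanh (κ * x) ^ 2)) := by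
  rw [kdvSoliton, ← sech_sq]
  ring

theorem kdvSoliton_cube (A κ x : ℝ) :
    kdvSoliton A κ x ^ 3 = -A ^ 3 * (sech (κ * x) ^ 2 * (1 - Real.tanh (κ * x) ^ 2) ^ 2) := by
  rw [kdvSoliton, ← sech_sq]
  ring

theorem hasDerivAt_kdvSoliton (A κ x : ℝ) :
    HasDerivAt (kdvSoliton A κ) (2 * A * κ * Real.tanh (κ * x) * sech (κ * x) ^ 2) x := by
  have hcomp := (hasDerivAt_tanh (κ * x)).comp x (hasDerivAt_const_mul κ)
  have heq : kdvSoliton A κ = fun y => -A * (1 - (Real.tanh ∘ (κ * ·)) y ^ 2) :=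
    funext fun y => by rw [kdvSoliton, sech_sq, Function.comp_apply]
  rw [heq]
  refine (((hcomp.pow 2).const_sub 1).const_mul (-A)).congr_deriv ?_
  simp only [Function.comp_apply]
  ring

theorem deriv_kdvSoliton_sq (A κ x : ℝ) :
    deriv (kdvSoliton A κ) x ^ 2 = (2 * A * κ) ^ 2 *
      (sech (κ * x) ^ 2 * (Real.tanh (κ * x) ^ 2 * (1 - Real.tanh (κ * x) ^ 2))) := by
  rw [(hasDerivAt_kdvSoliton A κ x).deriv, ← sech_sq]
  ring

theorem integral_kdvSoliton_sq (A : ℝ) (hκ : 0 < κ) :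
    ∫ x, kdvSoliton A κ x ^ 2 = 4 / 3 * (A ^ 2 / κ) := by
  simp only [kdvSoliton_sq, integral_const_mul]
  rw [integral_sech_sq_mul_comp_tanh_mul_left (q := fun t => 1 - t ^ 2) hκ]
  norm_num
  ring

theorem integral_kdvSoliton_cube (A : ℝ) (hκ : 0 < κ) :
    ∫ x, kdvSoliton A κ x ^ 3 = -(16 / 15) * (A ^ 3 / κ) := by
  have hpoly : ∫ t in (-1 : ℝ)..1, (1 - t ^ 2) ^ 2 = 16 / 15 := by
    have hexpand (t : ℝ) : (1 - t ^ 2) ^ 2 = 1 - 2 * t ^ 2 + t ^ 4 := by ring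
    simp only [hexpand]
    rw [intervalIntegral.integral_add (Continuous.intervalIntegrable (by fun_prop) _ _)
      (Continuous.intervalIntegrable (by fun_prop) _ _)]
    norm_num
  simp only [kdvSoliton_cube, integral_const_mul]
  rw [integral_sech_sq_mul_comp_tanh_mul_left (q := fun t => (1 - t ^ 2) ^ 2) hκ, hpoly]
  ring

theorem integral_deriv_kdvSoliton_sq (A : ℝ) (hκ : 0 < κ) :
    ∫ x, deriv (kdvSoliton A κ) x ^ 2 = 16 / 15 * (A ^ 2 * κ) := by
  have hpoly : ∫ t in (-1 : ℝ)..1, t ^ 2 * (1 - t ^ 2) = 4 / 15 := by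
    ring_nf
    norm_num
  simp only [deriv_kdvSoliton_sq, integral_const_mul]
  rw [integral_sech_sq_mul_comp_tanh_mul_left (q := fun t => t ^ 2 * (1 - t ^ 2)) hκ, hpoly]
  field_simp
  ring

theorem h1Pair_kdvSoliton (A : ℝ) (hκ : κ ≠ 0) :
    H1Pair (kdvSoliton A κ) (deriv (kdvSoliton A κ)) := by
  have hderiv := hasDerivAt_kdvSoliton A κ
  have hcont : Continuous (deriv (kdvSoliton A κ)) := by
    have := continuous_sech
    have := continuous_tanh
    rw [deriv_eq hderiv]
    fun_prop
  refine ⟨continuous_iff_continuousAt.2 fun x => (hderiv x).continuousAt, ?_, ?_, fun a b _ => ?_⟩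
  · simp only [kdvSoliton_sq]
    exact (integrable_sech_sq_mul_comp_tanh_mul_left (q := fun t => 1 - t ^ 2)
      (by fun_prop) hκ).const_mul _
  · simp only [deriv_kdvSoliton_sq]
    exact (integrable_sech_sq_mul_comp_tanh_mul_left (q := fun t => t ^ 2 * (1 - t ^ 2))
      (by fun_prop) hκ).const_mul _
  · exact (intervalIntegral.integral_deriv_eq_sub (fun x _ => (hderiv x).differentiableAt)
      (hcont.intervalIntegrable a b)).symm

theorem EKdV_kdvSoliton (c d A : ℝ) (hκ : 0 < κ) :
    EKdV c d (kdvSoliton A κ) (deriv (kdvSoliton A κ)) =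
      8 / 15 * (c * A ^ 2 * κ - d * A ^ 3 / κ) := by
  have h := h1Pair_kdvSoliton A hκ.ne'
  rw [EKdV, integral_add (h.2.2.1.const_mul c) (h.integrable_cube.const_mul d),
    integral_const_mul, integral_const_mul, integral_deriv_kdvSoliton_sq A hκ,
    integral_kdvSoliton_cube A hκ]
  ring

end Soliton

section Parameters

theorem rpow_pow_eq_rpow {x p r : ℝ} (hx : 0 ≤ x) (n : ℕ) (h : p * n = r) :
    (x ^ p) ^ n = x ^ r := by
  rw [← h, Real.rpow_mul_natCast hx]

theorem rpow_one_div_three_cube {x : ℝ} (hx : 0 ≤ x) : (x ^ ((1 : ℝ) / 3)) ^ 3 = x := by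
  rw [rpow_pow_eq_rpow (r := 1) hx 3 (by norm_num), Real.rpow_one]

theorem rpow_two_div_three_cube {x : ℝ} (hx : 0 ≤ x) : (x ^ ((2 : ℝ) / 3)) ^ 3 = x ^ 2 := by
  rw [rpow_pow_eq_rpow (r := 2) hx 3 (by norm_num), Real.rpow_two]

/-- The wavenumber of `φ_KdV`, with `s` standing for `ω² + 4`. -/
noncomputable def kdvWavenumber (c d s : ℝ) : ℝ :=
  (3 / 16 : ℝ) ^ ((1 : ℝ) / 3) * d ^ ((2 : ℝ) / 3) / (c ^ ((2 : ℝ) / 3) * s ^ ((1 : ℝ) / 6))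

/-- The depth of `φ_KdV`, with `s` standing for `ω² + 4`. -/
noncomputable def kdvDepth (c d s : ℝ) : ℝ :=
  √3 * (3 / 16 : ℝ) ^ ((1 : ℝ) / 6) * d ^ ((1 : ℝ) / 3) / (c ^ ((1 : ℝ) / 3) * s ^ ((1 : ℝ) / 3))

variable {c d s : ℝ}

theorem kdvWavenumber_pos (hc : 0 < c) (hd : 0 < d) (hs : 0 < s) : 0 < kdvWavenumber c d s := by
  unfold kdvWavenumber
  positivity

theorem kdvWavenumber_cube (hc : 0 < c) (hd : 0 < d) (hs : 0 < s) :
    kdvWavenumber c d s ^ 3 = 3 / 16 * (d ^ 2 / (c ^ 2 * √s)) := by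
  have hs2 : (s ^ ((1 : ℝ) / 6)) ^ 3 = √s := by
    rw [rpow_pow_eq_rpow (r := 1 / 2) hs.le 3 (by norm_num), Real.sqrt_eq_rpow]
  rw [kdvWavenumber, div_pow, mul_pow, mul_pow, rpow_one_div_three_cube (by norm_num),
    rpow_two_div_three_cube hd.le, rpow_two_div_three_cube hc.le, hs2, mul_div_assoc]

theorem kdvDepth_cube (hc : 0 < c) (hd : 0 < d) (hs : 0 < s) :
    kdvDepth c d s ^ 3 = 9 / 4 * (d / (c * s)) := by
  have hr : ((3 / 16 : ℝ) ^ ((1 : ℝ) / 6)) ^ 3 = √3 / 4 := by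
    rw [rpow_pow_eq_rpow (r := 1 / 2) (by norm_num) 3 (by norm_num), ← Real.sqrt_eq_rpow,
      Real.sqrt_div (by norm_num), show (16 : ℝ) = 4 ^ 2 by norm_num, Real.sqrt_sq (by norm_num)]
  have hconst : √3 ^ 3 * (√3 / 4) = 9 / 4 := by
    rw [show √3 ^ 3 * (√3 / 4) = (√3 ^ 2) ^ 2 / 4 by ring, Real.sq_sqrt (by norm_num)]
    norm_num
  rw [kdvDepth, div_pow, mul_pow, mul_pow, mul_pow, hr, hconst, rpow_one_div_three_cube hd.le,
    rpow_one_div_three_cube hc.le, rpow_one_div_three_cube hs.le, mul_div_assoc]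

theorem kdvDepth_eq (hc : 0 < c) (hd : 0 < d) (hs : 0 < s) :
    kdvDepth c d s = 4 * c * kdvWavenumber c d s ^ 2 / d := by
  have hpos : 0 ≤ kdvDepth c d s := by unfold kdvDepth; positivity
  refine (pow_left_inj₀ hpos (by positivity) three_ne_zero).1 ?_
  rw [kdvDepth_cube hc hd hs, div_pow, mul_pow, pow_right_comm, kdvWavenumber_cube hc hd hs]
  field_simp
  rw [Real.sq_sqrt hs.le]
  ring

theorem kdv_mass_eq (hc : 0 < c) (hd : 0 < d) (hs : 0 < s) :
    64 / 3 * (c ^ 2 * kdvWavenumber c d s ^ 3 / d ^ 2) = 2 * (2 * s ^ (-(1 : ℝ) / 2)) := by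
  rw [kdvWavenumber_cube hc hd hs, neg_div, Real.rpow_neg hs.le, ← Real.sqrt_eq_rpow]
  field_simp
  norm_num

theorem kdv_energy_eq (hc : 0 < c) (hd : 0 < d) (hs : 0 < s) :
    -(128 / 5) * (c ^ 3 * kdvWavenumber c d s ^ 5 / d ^ 2) =
      -(9 / 5) * (2 / 3 : ℝ) ^ ((1 : ℝ) / 3) * d ^ ((4 : ℝ) / 3) /
        (c ^ ((1 : ℝ) / 3) * s ^ ((5 : ℝ) / 6)) := by
  -- Taking cubes leaves only integer powers of `c`, `d` and `√s`.
  have hd4 : (d ^ ((4 : ℝ) / 3)) ^ 3 = d ^ 4 := by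
    rw [rpow_pow_eq_rpow hd.le 3 rfl, ← Real.rpow_natCast d 4]
    norm_num
  have hs5 : (s ^ ((5 : ℝ) / 6)) ^ 3 = √s ^ 5 := by
    rw [rpow_pow_eq_rpow hs.le 3 rfl, Real.sqrt_eq_rpow, rpow_pow_eq_rpow hs.le 5 rfl]
    norm_num
  have hodd : Odd 3 := by decide
  refine hodd.strictMono_pow.injective ?_
  simp only [mul_pow, div_pow, rpow_one_div_three_cube (show (0 : ℝ) ≤ 2 / 3 by norm_num),
    rpow_one_div_three_cube hc.le, hd4, hs5, pow_right_comm _ 5 3, kdvWavenumber_cube hc hd hs]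
  field_simp
  norm_num

end Parameters

theorem stmt2 (ν₀ ω β : ℝ) (hν₀ : 0 < ν₀) (hβ : ν₀ ^ 2 / 3 < β)
    (c d αK cK : ℝ) (hc : c = β - ν₀ ^ 2 / 3) (hd : d = ω ^ 2 / 3 + 1)
    (hα : αK = 2 * (ω ^ 2 + 4) ^ (-(1 : ℝ) / 2))
    (hcK : cK = -(9 / 5) * (2 / 3 : ℝ) ^ ((1 : ℝ) / 3) * d ^ ((4 : ℝ) / 3) /
      (c ^ ((1 : ℝ) / 3) * (ω ^ 2 + 4) ^ ((5 : ℝ) / 6)))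
    (φK : ℝ → ℝ)
    (hφK : ∀ x, φK x = -Real.sqrt 3 * (3 / 16 : ℝ) ^ ((1 : ℝ) / 6) * d ^ ((1 : ℝ) / 3) /
      (c ^ ((1 : ℝ) / 3) * (ω ^ 2 + 4) ^ ((1 : ℝ) / 3)) *
      sech ((3 / 16 : ℝ) ^ ((1 : ℝ) / 3) * d ^ ((2 : ℝ) / 3) * x /
        (c ^ ((2 : ℝ) / 3) * (ω ^ 2 + 4) ^ ((1 : ℝ) / 6))) ^ 2) :
    H1Pair φK (deriv φK) ∧ (∫ x : ℝ, (φK x) ^ 2) = 2 * αK ∧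
      EKdV c d φK (deriv φK) = cK ∧
      ∀ φ φ' : ℝ → ℝ, H1Pair φ φ' → (∫ x : ℝ, (φ x) ^ 2) = 2 * αK →
        cK ≤ EKdV c d φ φ' := by
  have hc0 : 0 < c := by rw [hc]; linarith
  have hd0 : 0 < d := by rw [hd]; positivity
  have hs0 : 0 < ω ^ 2 + 4 := by positivity
  set κ := kdvWavenumber c d (ω ^ 2 + 4)
  have hκ : 0 < κ := kdvWavenumber_pos hc0 hd0 hs0
  obtain rfl : φK = kdvSoliton (4 * c * κ ^ 2 / d) κ := by
    ext x
    rw [hφK, ← kdvDepth_eq hc0 hd0 hs0, kdvSoliton, kdvDepth, mul_div_right_comm _ x]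
    simp only [κ, kdvWavenumber]
    ring
  have hmass : 2 * αK = 64 / 3 * (c ^ 2 * κ ^ 3 / d ^ 2) := by rw [hα, kdv_mass_eq hc0 hd0 hs0]
  have henergy : cK = -(128 / 5) * (c ^ 3 * κ ^ 5 / d ^ 2) := by
    rw [hcK, kdv_energy_eq hc0 hd0 hs0]
  rw [hmass, henergy]
  refine ⟨h1Pair_kdvSoliton _ hκ.ne', ?_, ?_, fun φ φ' h hφ => h.le_EKdV hc0 hd0 hκ.le hφ⟩
  · rw [integral_kdvSoliton_sq _ hκ]
    field_simp
    norm_num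
  · rw [EKdV_kdvSoliton _ _ _ hκ]
    field_simp
    norm_num
end

section
/- If ψ : ℝ → ℂ is twice continuously differentiable, not identically zero, satisfies −(1/4)·g₂·ψ″(x) − 2ν_NLS·ψ(x) + (3/2)·A·|ψ(x)|²·ψ(x) = 0 for every x ∈ ℝ, and ψ(x) → 0 as x → ∞, then there exist θ ∈ [0, 2π) and y ∈ ℝ such that ψ(x) = e^{iθ}·φ_NLS(x + y) for all x ∈ ℝ; conversely, every function e^{iθ}φ_NLS(· + y) is such a solution. In other words, the set of nontrivial decaying solutions is exactly D_NLS = { e^{iθ}φ_NLS(· + y) : θ ∈ [0,2π), y ∈ ℝ }. -/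
open Filter

/-!
A decaying solution of `ψ'' = (k² - 2b²‖ψ‖²) ψ` has a decaying derivative, so its conserved energy
and angular momentum vanish. Zero energy gives `‖ψ'‖ ≤ k‖ψ‖`, so a nontrivial solution has no zeros;
zero angular momentum then makes `ψ / ‖ψ‖` constant, which leaves a positive scalar solution `ρ`.
On the zero energy level the equation for `1 / ρ` is linear, `(1 / ρ)'' = k² (1 / ρ)`, and energy
conservation singles out the multiples of translates of `cosh` among its solutions.
-/

open scoped Topology RealInnerProductSpace

section NormedSpace

variable {F : Type*} [NormedAddCommGroup F] [NormedSpace ℝ F] {f f' f'' : ℝ → F}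

theorem eq_zero_of_hasDerivAt_zero_of_tendsto_zero (hf : ∀ x, HasDerivAt f 0 x)
    (hlim : Tendsto f atTop (𝓝 0)) (x : ℝ) : f x = 0 := by
  have hconst : f = fun _ => f x := funext fun y =>
    is_const_of_deriv_eq_zero (fun z => (hf z).differentiableAt) (fun z => (hf z).deriv) y x
  rw [hconst] at hlim
  exact tendsto_nhds_unique tendsto_const_nhds hlim

theorem norm_sub_sub_le_of_norm_second_deriv_le {C x : ℝ} (hf : ∀ x, HasDerivAt f (f' x) x)
    (hf' : ∀ x, HasDerivAt f' (f'' x) x) (hC : ∀ t, x ≤ t → ‖f'' t‖ ≤ C) :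
    ‖f (x + 1) - f x - f' x‖ ≤ C := by
  have hC₀ : 0 ≤ C := (norm_nonneg _).trans (hC x le_rfl)
  have hf'_close : ∀ t ∈ Set.Ico x (x + 1), ‖f' t - f' x‖ ≤ C := fun t ht =>
    calc ‖f' t - f' x‖ ≤ C * (t - x) :=
          norm_image_sub_le_of_norm_deriv_le_segment'
            (fun s _ => (hf' s).hasDerivWithinAt) (fun s hs => hC s hs.1) t ⟨ht.1, le_rfl⟩
      _ ≤ C := mul_le_of_le_one_right hC₀ (by linarith [ht.2])
  have hlin : ∀ t, HasDerivAt (fun t => f t - (t - x) • f' x) (f' t - f' x) t := fun t => by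
    simpa using (hf t).fun_sub (((hasDerivAt_id t).sub_const x).smul_const (f' x))
  have hmvt := norm_image_sub_le_of_norm_deriv_le_segment'
    (fun s _ => (hlin s).hasDerivWithinAt) hf'_close (x + 1) ⟨by linarith, le_rfl⟩
  simpa [sub_right_comm] using hmvt

theorem tendsto_deriv_zero_of_tendsto_zero (hf : ∀ x, HasDerivAt f (f' x) x)
    (hf' : ∀ x, HasDerivAt f' (f'' x) x) (hlim : Tendsto f atTop (𝓝 0))
    (hlim'' : Tendsto f'' atTop (𝓝 0)) : Tendsto f' atTop (𝓝 0) := by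
  have hdiff : Tendsto (fun x => f (x + 1) - f x) atTop (𝓝 0) := by
    simpa using (hlim.comp (tendsto_atTop_add_const_right _ 1 tendsto_id)).sub hlim
  have hrem : Tendsto (fun x => f (x + 1) - f x - f' x) atTop (𝓝 0) := by
    rw [Metric.nhds_basis_closedBall.tendsto_right_iff]
    intro ε hε
    obtain ⟨N, hN⟩ := eventually_atTop.1
      (Metric.nhds_basis_closedBall.tendsto_right_iff.1 hlim'' ε hε)
    filter_upwards [eventually_ge_atTop N] with x hx
    exact mem_closedBall_zero_iff.2 (norm_sub_sub_le_of_norm_second_deriv_le hf hf'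
      fun t ht => mem_closedBall_zero_iff.1 (hN t (hx.trans ht)))
  simpa using hdiff.sub hrem

theorem eq_zero_of_norm_deriv_le_mul_norm {K a : ℝ} (hf : ∀ x, HasDerivAt f (f' x) x)
    (hbound : ∀ x, ‖f' x‖ ≤ K * ‖f x‖) (ha : f a = 0) : f = 0 := by
  funext x
  rcases le_total a x with hax | hxa
  · exact eq_zero_of_abs_deriv_le_mul_abs_self_of_eq_zero_right
      (fun t _ => (hf t).continuousAt.continuousWithinAt) (fun t _ => (hf t).hasDerivWithinAt) ha
      (fun t _ => hbound t) x ⟨hax, le_rfl⟩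
  · have hrefl : ∀ t, HasDerivAt (fun t => f (-t)) (-f' (-t)) t := fun t => by
      simpa [Function.comp_def] using (hf (-t)).scomp t (hasDerivAt_neg t)
    simpa using eq_zero_of_abs_deriv_le_mul_abs_self_of_eq_zero_right (a := -a) (b := -x)
      (fun t _ => (hrefl t).continuousAt.continuousWithinAt)
      (fun t _ => (hrefl t).hasDerivWithinAt) (by simpa using ha)
      (fun t _ => by simpa using hbound (-t)) (-x) ⟨neg_le_neg hxa, le_rfl⟩

end NormedSpace

section InnerProductSpace

variable {E : Type*} [NormedAddCommGroup E] [InnerProductSpace ℝ E] {f f' : ℝ → E}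

theorem hasDerivAt_energy_of_central_force {V V' : ℝ → ℝ} {x : ℝ}
    (hV : HasDerivAt V (V' (‖f x‖ ^ 2)) (‖f x‖ ^ 2)) (hf : HasDerivAt f (f' x) x)
    (hf' : HasDerivAt f' (V' (‖f x‖ ^ 2) • f x) x) :
    HasDerivAt (fun x => ‖f' x‖ ^ 2 - V (‖f x‖ ^ 2)) 0 x := by
  refine (hf'.norm_sq.sub (hV.comp x hf.norm_sq)).congr_deriv ?_
  rw [real_inner_smul_right, real_inner_comm]
  ring

theorem hasDerivAt_angularMomentum_of_central_force {c x : ℝ} (u v : E)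
    (hf : HasDerivAt f (f' x) x) (hf' : HasDerivAt f' (c • f x) x) :
    HasDerivAt (fun x => ⟪u, f x⟫ * ⟪v, f' x⟫ - ⟪v, f x⟫ * ⟪u, f' x⟫) 0 x := by
  have hinner : ∀ (w : E) {g : ℝ → E} {g' : E}, HasDerivAt g g' x →
      HasDerivAt (fun x => ⟪w, g x⟫) ⟪w, g'⟫ x := fun w _ _ hg => by
    simpa using (hasDerivAt_const x w).inner ℝ hg
  refine (((hinner u hf).mul (hinner v hf')).sub
    ((hinner v hf).mul (hinner u hf'))).congr_deriv ?_
  simp only [real_inner_smul_right]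
  ring

theorem norm_sq_smul_deriv_eq_inner_smul_of_tendsto_zero {c : ℝ → ℝ}
    (hf : ∀ x, HasDerivAt f (f' x) x) (hf' : ∀ x, HasDerivAt f' (c x • f x) x)
    (hlim : Tendsto f atTop (𝓝 0)) (hlim' : Tendsto f' atTop (𝓝 0)) (x : ℝ) :
    ‖f x‖ ^ 2 • f' x = ⟪f x, f' x⟫ • f x := by
  refine ext_inner_left ℝ fun v => ?_
  have hinner : ∀ (w : E) {g : ℝ → E}, Tendsto g atTop (𝓝 0) →
      Tendsto (fun x => ⟪w, g x⟫) atTop (𝓝 0) := fun w _ hg => by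
    simpa using (tendsto_const_nhds (x := w)).inner hg
  have hlim_momentum := ((hinner (f x) hlim).mul (hinner v hlim')).sub
    ((hinner v hlim).mul (hinner (f x) hlim'))
  have hzero := eq_zero_of_hasDerivAt_zero_of_tendsto_zero
    (fun t => hasDerivAt_angularMomentum_of_central_force (f x) v (hf t) (hf' t))
    (by simpa using hlim_momentum) x
  rw [real_inner_self_eq_norm_sq] at hzero
  rw [real_inner_smul_right, real_inner_smul_right]
  linarith

theorem hasDerivAt_inv_norm {v : E} {x : ℝ} (hf : HasDerivAt f v x) (hx : f x ≠ 0) :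
    HasDerivAt (fun x => ‖f x‖⁻¹) (-⟪f x, v⟫ / ‖f x‖ ^ 3) x := by
  have hnorm : ‖f x‖ ≠ 0 := norm_ne_zero_iff.2 hx
  have hsqrt := (hf.norm_sq.sqrt (pow_ne_zero 2 hnorm)).inv (by simpa using hx)
  simp only [Real.sqrt_sq (norm_nonneg _)] at hsqrt
  refine hsqrt.congr_deriv ?_
  field_simp

theorem exists_unit_eq_norm_smul (hf : ∀ x, HasDerivAt f (f' x) x) (hne : ∀ x, f x ≠ 0)
    (hradial : ∀ x, ‖f x‖ ^ 2 • f' x = ⟪f x, f' x⟫ • f x) :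
    ∃ e : E, ‖e‖ = 1 ∧ ∀ x, f x = ‖f x‖ • e := by
  have hnorm : ∀ x, ‖f x‖ ≠ 0 := fun x => norm_ne_zero_iff.2 (hne x)
  have hdir : ∀ x, HasDerivAt (fun x => ‖f x‖⁻¹ • f x) 0 x := fun x => by
    refine ((hasDerivAt_inv_norm (hf x) (hne x)).smul (hf x)).congr_deriv ?_
    calc ‖f x‖⁻¹ • f' x + (-⟪f x, f' x⟫ / ‖f x‖ ^ 3) • f x
        = (‖f x‖ ^ 3)⁻¹ • (‖f x‖ ^ 2 • f' x - ⟪f x, f' x⟫ • f x) := by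
          have := hnorm x
          match_scalars <;> field_simp
      _ = 0 := by rw [hradial, sub_self, smul_zero]
  refine ⟨‖f 0‖⁻¹ • f 0, norm_smul_inv_norm (𝕜 := ℝ) (hne 0), fun x => ?_⟩
  rw [← is_const_of_deriv_eq_zero (fun t => (hdir t).differentiableAt)
    (fun t => (hdir t).deriv) x 0, smul_inv_smul₀ (hnorm x)]

end InnerProductSpace

section Hyperbolic

theorem eq_mul_exp_of_hasDerivAt_mul_self {f : ℝ → ℝ} {c : ℝ}
    (hf : ∀ x, HasDerivAt f (c * f x) x) (x : ℝ) : f x = f 0 * Real.exp (c * x) := by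
  have hexp : ∀ x, HasDerivAt (fun x => Real.exp (-(c * x))) (Real.exp (-(c * x)) * -c) x :=
    fun x => by simpa using ((hasDerivAt_id x).const_mul c).neg.exp
  have hzero : ∀ x, HasDerivAt (fun x => f x * Real.exp (-(c * x))) 0 x := fun x =>
    ((hf x).mul (hexp x)).congr_deriv (by ring)
  have hconst := is_const_of_deriv_eq_zero (fun t => (hzero t).differentiableAt)
    (fun t => (hzero t).deriv) x 0
  simp only [mul_zero, neg_zero, Real.exp_zero, mul_one] at hconst
  rw [← hconst, mul_assoc, ← Real.exp_add, neg_add_cancel, Real.exp_zero, mul_one]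

theorem exists_eq_mul_cosh_of_hasDerivAt {r r' : ℝ → ℝ} {k b : ℝ} (hk : 0 < k) (hb : 0 < b)
    (hr : ∀ x, HasDerivAt r (r' x) x) (hr' : ∀ x, HasDerivAt r' (k ^ 2 * r x) x)
    (hpos : 0 < r 0) (henergy : (k * r 0) ^ 2 - r' 0 ^ 2 = b ^ 2) :
    ∃ y, ∀ x, r x = b / k * Real.cosh (k * (x + y)) := by
  have hgrow := eq_mul_exp_of_hasDerivAt_mul_self (f := fun x => k * r x + r' x) (c := k)
    fun x => (((hr x).const_mul k).add (hr' x)).congr_deriv (by ring)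
  have hdecay := eq_mul_exp_of_hasDerivAt_mul_self (f := fun x => k * r x - r' x) (c := -k)
    fun x => (((hr x).const_mul k).sub (hr' x)).congr_deriv (by ring)
  have hr'_lt : |r' 0| < k * r 0 := abs_lt_of_sq_lt_sq (by nlinarith) (by positivity)
  set P := k * r 0 + r' 0
  have hP : 0 < P := by linarith [neg_abs_le (r' 0)]
  have hQ : k * r 0 - r' 0 = b ^ 2 / P := by
    rw [eq_div_iff hP.ne']
    linear_combination henergy
  refine ⟨Real.log (P / b) / k, fun x => ?_⟩
  have hphase : k * (x + Real.log (P / b) / k) = k * x + Real.log (P / b) := by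
    field_simp
  have hsum : 2 * (k * r x) = P * Real.exp (k * x) + b ^ 2 / P * Real.exp (-k * x) := by
    rw [← hQ, ← hgrow, ← hdecay]
    ring
  rw [hphase, Real.cosh_eq, neg_add, Real.exp_add, Real.exp_add, Real.exp_neg (Real.log _),
    Real.exp_log (by positivity), ← neg_mul]
  field_simp at hsum ⊢
  linear_combination hsum

theorem contDiff_sech {n : WithTop ℕ∞} : ContDiff ℝ n sech :=
  contDiff_const.div Real.contDiff_cosh fun x => (Real.cosh_pos x).ne'

theorem sech_pos (x : ℝ) : 0 < sech x := one_div_pos.2 (Real.cosh_pos x)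

theorem hasDerivAt_sech (x : ℝ) : HasDerivAt sech (-(Real.sinh x * sech x ^ 2)) x := by
  have hcosh := (Real.cosh_pos x).ne'
  simp only [funext fun x => show sech x = (Real.cosh x)⁻¹ from one_div _]
  refine ((Real.hasDerivAt_cosh x).inv hcosh).congr_deriv ?_
  field_simp

theorem hasDerivAt_neg_sinh_mul_sech_sq (x : ℝ) :
    HasDerivAt (fun x => -(Real.sinh x * sech x ^ 2)) (sech x - 2 * sech x ^ 3) x := by
  refine ((Real.hasDerivAt_sinh x).mul ((hasDerivAt_sech x).pow 2)).neg.congr_deriv ?_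
  have hcosh := (Real.cosh_pos x).ne'
  simp only [sech, Pi.pow_apply, Nat.cast_ofNat, Nat.add_one_sub_one, pow_one]
  field_simp
  rw [Real.sinh_sq]
  ring

theorem tendsto_sech_atTop : Tendsto sech atTop (𝓝 0) := by
  have hcosh : Tendsto Real.cosh atTop atTop :=
    tendsto_atTop_mono (fun x => by rw [Real.cosh_eq]; linarith [Real.exp_pos (-x)])
      (Real.tendsto_exp_atTop.atTop_div_const two_pos)
  exact tendsto_const_nhds.div_atTop hcosh

end Hyperbolic

/-- Twice continuously differentiable solutions of the stationary focusing cubic nonlinear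
Schrödinger equation `ψ'' = (k² - 2b²‖ψ‖²) ψ`, with values in a real inner product space. The factor
`2` makes `k / b` the amplitude and `k` the inverse width of its soliton. -/
structure IsStationaryNLS {E : Type*} [NormedAddCommGroup E] [InnerProductSpace ℝ E] (k b : ℝ)
    (ψ : ℝ → E) : Prop where
  contDiff : ContDiff ℝ 2 ψ
  deriv_deriv : ∀ x, deriv (deriv ψ) x = (k ^ 2 - 2 * b ^ 2 * ‖ψ x‖ ^ 2) • ψ x

/-- The bright soliton of the stationary cubic equation of `IsStationaryNLS`, centred at `0`. -/
noncomputable def soliton (k b x : ℝ) : ℝ := k / b * sech (k * x)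

namespace IsStationaryNLS

variable {E : Type*} [NormedAddCommGroup E] [InnerProductSpace ℝ E] {k b : ℝ} {ψ : ℝ → E}

theorem hasDerivAt (h : IsStationaryNLS k b ψ) (x : ℝ) : HasDerivAt ψ (deriv ψ x) x :=
  (h.contDiff.differentiable two_ne_zero x).hasDerivAt

theorem hasDerivAt_deriv (h : IsStationaryNLS k b ψ) (x : ℝ) :
    HasDerivAt (deriv ψ) ((k ^ 2 - 2 * b ^ 2 * ‖ψ x‖ ^ 2) • ψ x) x :=
  h.deriv_deriv x ▸ (h.contDiff.differentiable_deriv_two x).hasDerivAt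

theorem tendsto_deriv (h : IsStationaryNLS k b ψ) (hlim : Tendsto ψ atTop (𝓝 0)) :
    Tendsto (deriv ψ) atTop (𝓝 0) := by
  refine tendsto_deriv_zero_of_tendsto_zero h.hasDerivAt h.hasDerivAt_deriv hlim ?_
  have hcoeff := ((hlim.norm.pow 2).const_mul (2 * b ^ 2)).const_sub (k ^ 2)
  simpa using hcoeff.smul hlim

theorem norm_deriv_sq (h : IsStationaryNLS k b ψ) (hlim : Tendsto ψ atTop (𝓝 0)) (x : ℝ) :
    ‖deriv ψ x‖ ^ 2 = k ^ 2 * ‖ψ x‖ ^ 2 - b ^ 2 * (‖ψ x‖ ^ 2) ^ 2 := by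
  have hV : ∀ s : ℝ, HasDerivAt (fun s => k ^ 2 * s - b ^ 2 * s ^ 2) (k ^ 2 - 2 * b ^ 2 * s) s :=
    fun s => (((hasDerivAt_id s).const_mul (k ^ 2)).sub
      ((hasDerivAt_pow 2 s).const_mul (b ^ 2))).congr_deriv (by norm_num; ring)
  have hnorm := hlim.norm.pow 2
  have hlim_energy := ((h.tendsto_deriv hlim).norm.pow 2).sub
    ((hnorm.const_mul (k ^ 2)).sub ((hnorm.pow 2).const_mul (b ^ 2)))
  exact sub_eq_zero.1 (eq_zero_of_hasDerivAt_zero_of_tendsto_zero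
    (fun t => hasDerivAt_energy_of_central_force (V' := fun s => k ^ 2 - 2 * b ^ 2 * s) (hV _)
      (h.hasDerivAt t) (h.hasDerivAt_deriv t))
    (by simpa using hlim_energy) x)

theorem norm_deriv_le (h : IsStationaryNLS k b ψ) (hlim : Tendsto ψ atTop (𝓝 0)) (x : ℝ) :
    ‖deriv ψ x‖ ≤ |k| * ‖ψ x‖ := by
  refine le_of_sq_le_sq ?_ (by positivity)
  rw [h.norm_deriv_sq hlim, mul_pow, sq_abs]
  linarith [mul_nonneg (sq_nonneg b) (sq_nonneg (‖ψ x‖ ^ 2))]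

theorem apply_ne_zero (h : IsStationaryNLS k b ψ) (hlim : Tendsto ψ atTop (𝓝 0)) (hψ : ψ ≠ 0)
    (x : ℝ) : ψ x ≠ 0 := fun hx =>
  hψ (eq_zero_of_norm_deriv_le_mul_norm h.hasDerivAt (h.norm_deriv_le hlim) hx)

theorem smul_unit_iff {ρ : ℝ → ℝ} {e : E} (he : ‖e‖ = 1) :
    IsStationaryNLS k b (fun x => ρ x • e) ↔ IsStationaryNLS k b ρ := by
  have hcontDiff : ContDiff ℝ 2 (fun x => ρ x • e) ↔ ContDiff ℝ 2 ρ := by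
    refine ⟨fun h => ?_, fun h => h.smul contDiff_const⟩
    simpa [real_inner_smul_right, he] using (contDiff_const (c := e)).inner ℝ h
  have hderiv : ContDiff ℝ 2 ρ → ∀ x, deriv (deriv fun x => ρ x • e) x = deriv (deriv ρ) x • e := by
    intro h x
    rw [funext fun t => deriv_smul_const (h.differentiable two_ne_zero t) e,
      deriv_smul_const (h.differentiable_deriv_two x)]
  have hequation : ∀ x, deriv (deriv ρ) x • e = (k ^ 2 - 2 * b ^ 2 * ‖ρ x • e‖ ^ 2) • ρ x • e ↔
      deriv (deriv ρ) x = (k ^ 2 - 2 * b ^ 2 * ‖ρ x‖ ^ 2) • ρ x := fun x => by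
    rw [norm_smul, he, mul_one, smul_smul, smul_eq_mul,
      (smul_left_injective ℝ (norm_ne_zero_iff.1 (he ▸ one_ne_zero))).eq_iff]
  constructor
  · rintro ⟨hψ, hode⟩
    have hρ := hcontDiff.1 hψ
    exact ⟨hρ, fun x => (hequation x).1 (hderiv hρ x ▸ hode x)⟩
  · rintro ⟨hρ, hode⟩
    exact ⟨hcontDiff.2 hρ, fun x => hderiv hρ x ▸ (hequation x).2 (hode x)⟩

theorem exists_eq_soliton {ρ : ℝ → ℝ} (h : IsStationaryNLS k b ρ) (hk : 0 < k) (hb : 0 < b)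
    (hlim : Tendsto ρ atTop (𝓝 0)) (hpos : ∀ x, 0 < ρ x) :
    ∃ y, ∀ x, ρ x = soliton k b (x + y) := by
  have henergy : ∀ x, deriv ρ x ^ 2 = k ^ 2 * ρ x ^ 2 - b ^ 2 * (ρ x ^ 2) ^ 2 := fun x => by
    simpa using h.norm_deriv_sq hlim x
  have hinv : ∀ x, HasDerivAt (fun x => (ρ x)⁻¹) (-deriv ρ x / ρ x ^ 2) x := fun x =>
    (h.hasDerivAt x).inv (hpos x).ne'
  have hinv' : ∀ x, HasDerivAt (fun x => -deriv ρ x / ρ x ^ 2) (k ^ 2 * (ρ x)⁻¹) x := fun x => by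
    have hρ := (hpos x).ne'
    refine ((h.hasDerivAt_deriv x).neg.div ((h.hasDerivAt x).pow 2)
      (pow_ne_zero 2 hρ)).congr_deriv ?_
    simp only [Real.norm_eq_abs, sq_abs, smul_eq_mul, Pi.neg_apply, Pi.pow_apply]
    field_simp
    linear_combination 2 * ρ x * henergy x
  obtain ⟨y, hy⟩ := exists_eq_mul_cosh_of_hasDerivAt hk hb hinv hinv' (inv_pos.2 (hpos 0)) (by
    have hρ := (hpos 0).ne'
    field_simp
    linear_combination -henergy 0)
  refine ⟨y, fun x => ?_⟩
  rw [← inv_inv (ρ x), hy, soliton, sech, mul_inv, inv_div, one_div]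

end IsStationaryNLS

theorem isStationaryNLS_soliton {k b : ℝ} (hb : b ≠ 0) (y : ℝ) :
    IsStationaryNLS k b fun x => soliton k b (x + y) := by
  have hphase : ∀ x, HasDerivAt (fun x => k * (x + y)) k x := fun x => by
    simpa using ((hasDerivAt_id x).add_const y).const_mul k
  refine ⟨contDiff_const.mul (contDiff_sech.comp (by fun_prop)), fun x => ?_⟩
  have hderiv : deriv (fun x => soliton k b (x + y)) =
      fun x => k / b * (-(Real.sinh (k * (x + y)) * sech (k * (x + y)) ^ 2) * k) :=
    funext fun t => (((hasDerivAt_sech _).comp t (hphase t)).const_mul (k / b)).deriv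
  have hderiv' :=
    (((hasDerivAt_neg_sinh_mul_sech_sq _).comp x (hphase x)).mul_const k).const_mul (k / b)
  rw [hderiv]
  refine hderiv'.deriv.trans ?_
  simp only [Real.norm_eq_abs, sq_abs, smul_eq_mul, soliton]
  field_simp

theorem tendsto_soliton {k : ℝ} (hk : 0 < k) (b y : ℝ) :
    Tendsto (fun x => soliton k b (x + y)) atTop (𝓝 0) := by
  have hphase : Tendsto (fun x => k * (x + y)) atTop atTop :=
    (tendsto_atTop_add_const_right _ y tendsto_id).const_mul_atTop hk
  simpa [soliton] using (tendsto_sech_atTop.comp hphase).const_mul (k / b)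

theorem soliton_pos {k b : ℝ} (hk : 0 < k) (hb : 0 < b) (x : ℝ) : 0 < soliton k b x :=
  mul_pos (div_pos hk hb) (sech_pos _)

section Classification

variable {E : Type*} [NormedAddCommGroup E] [InnerProductSpace ℝ E]

theorem isStationaryNLS_and_tendsto_zero_iff {k b : ℝ} (hk : 0 < k) (hb : 0 < b) (ψ : ℝ → E) :
    (IsStationaryNLS k b ψ ∧ ψ ≠ 0 ∧ Tendsto ψ atTop (𝓝 0)) ↔
      ∃ e : E, ‖e‖ = 1 ∧ ∃ y, ψ = fun x => soliton k b (x + y) • e := by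
  constructor
  · rintro ⟨h, hψ, hlim⟩
    have hne := h.apply_ne_zero hlim hψ
    obtain ⟨e, he, hψe⟩ := exists_unit_eq_norm_smul h.hasDerivAt hne
      (norm_sq_smul_deriv_eq_inner_smul_of_tendsto_zero h.hasDerivAt h.hasDerivAt_deriv hlim
        (h.tendsto_deriv hlim))
    have hnorm : IsStationaryNLS k b fun x => ‖ψ x‖ :=
      (IsStationaryNLS.smul_unit_iff he).1 (funext hψe ▸ h)
    obtain ⟨y, hy⟩ := hnorm.exists_eq_soliton hk hb (by simpa using hlim.norm)
      fun x => norm_pos_iff.2 (hne x)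
    exact ⟨e, he, y, funext fun x => by rw [← hy, ← hψe]⟩
  · rintro ⟨e, he, y, rfl⟩
    refine ⟨(IsStationaryNLS.smul_unit_iff he).2 (isStationaryNLS_soliton hb.ne' y),
      fun hzero => ?_, by simpa using (tendsto_soliton hk b y).smul_const e⟩
    have he₀ : e ≠ 0 := norm_ne_zero_iff.1 (he ▸ one_ne_zero)
    exact smul_ne_zero (soliton_pos hk hb (0 + y)).ne' he₀ (congrFun hzero 0)

theorem stmt6_general (g₂ A α : ℝ) (hg₂ : 0 < g₂) (hA : A < 0) (hα : 0 < α)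
    (νNLS : ℝ) (hν : νNLS = -9 * α ^ 2 * A ^ 2 / (8 * g₂))
    (φN : ℝ → ℝ)
    (hφN : ∀ x, φN x = α * Real.sqrt (-3 * A / g₂) * sech (-3 * α * A * x / g₂)) (ψ : ℝ → E) :
    (ContDiff ℝ 2 ψ ∧ ψ ≠ 0 ∧
        (∀ x, -(1 / 4 * g₂) • deriv (deriv ψ) x - (2 * νNLS) • ψ x +
          (3 / 2 * A * ‖ψ x‖ ^ 2) • ψ x = 0) ∧
        Tendsto ψ atTop (𝓝 0))
      ↔ ∃ e : E, ‖e‖ = 1 ∧ ∃ y : ℝ, ψ = fun x => φN (x + y) • e := by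
  have hratio : 0 < -3 * A / g₂ := div_pos (by linarith) hg₂
  set b := Real.sqrt (-3 * A / g₂)
  have hb : 0 < b := Real.sqrt_pos.2 hratio
  have hb_sq : b ^ 2 = -3 * A / g₂ := Real.sq_sqrt hratio.le
  have hφ : ∀ x, φN x = soliton (α * b ^ 2) b x := fun x => by
    rw [hφN, soliton, show α * b ^ 2 / b = α * b by field_simp, hb_sq]
    congr 2
    ring
  have hfactor : ∀ x, -(1 / 4 * g₂) • deriv (deriv ψ) x - (2 * νNLS) • ψ x +
      (3 / 2 * A * ‖ψ x‖ ^ 2) • ψ x = -(1 / 4 * g₂) •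
        (deriv (deriv ψ) x - ((α * b ^ 2) ^ 2 - 2 * b ^ 2 * ‖ψ x‖ ^ 2) • ψ x) := fun x => by
    rw [hν, hb_sq]
    match_scalars
    · ring
    · field_simp
      ring
  have hcoeff : -(1 / 4 * g₂) ≠ 0 := neg_ne_zero.2 (by positivity)
  simp only [hφ, hfactor, smul_eq_zero_iff_right hcoeff, sub_eq_zero]
  rw [← isStationaryNLS_and_tendsto_zero_iff (by positivity) hb]
  exact ⟨fun ⟨hC2, hne, hode, hlim⟩ => ⟨⟨hC2, hode⟩, hne, hlim⟩,
    fun ⟨⟨hC2, hode⟩, hne, hlim⟩ => ⟨hC2, hne, hode, hlim⟩⟩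

end Classification

theorem norm_eq_one_iff_exists_mem_Ico (z : ℂ) :
    ‖z‖ = 1 ↔ ∃ θ ∈ Set.Ico (0 : ℝ) (2 * Real.pi), z = Complex.exp (θ * Complex.I) := by
  constructor
  · intro hz
    obtain ⟨θ, rfl⟩ := (Complex.norm_eq_one_iff z).1 hz
    have hper : Function.Periodic (fun θ : ℝ => Complex.exp (θ * Complex.I)) (2 * Real.pi) :=
      fun θ => by simpa using Complex.exp_mul_I_periodic θ
    exact hper.exists_mem_Ico₀ Real.two_pi_pos θ
  · rintro ⟨θ, -, rfl⟩
    exact Complex.norm_exp_ofReal_mul_I θ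

theorem stmt6 (g₂ A α : ℝ) (hg₂ : 0 < g₂) (hA : A < 0) (hα : 0 < α)
    (νNLS : ℝ) (hν : νNLS = -9 * α ^ 2 * A ^ 2 / (8 * g₂))
    (φN : ℝ → ℝ)
    (hφN : ∀ x, φN x = α * Real.sqrt (-3 * A / g₂) * sech (-3 * α * A * x / g₂)) :
    ∀ ψ : ℝ → ℂ,
      (ContDiff ℝ 2 ψ ∧ ψ ≠ 0 ∧
        (∀ x : ℝ, -(1 / 4 : ℂ) * (g₂ : ℂ) * deriv (deriv ψ) x - 2 * (νNLS : ℂ) * ψ x +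
          (3 / 2 : ℂ) * (A : ℂ) * ((‖ψ x‖ ^ 2 : ℝ) : ℂ) * ψ x = 0) ∧
        Tendsto ψ atTop (nhds 0))
      ↔ ∃ θ ∈ Set.Ico (0 : ℝ) (2 * Real.pi), ∃ y : ℝ,
          ψ = fun x => Complex.exp ((θ : ℂ) * Complex.I) * ((φN (x + y) : ℝ) : ℂ) := by
  intro ψ
  have hclass := stmt6_general g₂ A α hg₂ hA hα νNLS hν φN hφN ψ
  simpa [norm_eq_one_iff_exists_mem_Ico, mul_comm] using hclass
end
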